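/- (Segre) Let k = 2^i with i ≥ 1 and let e ≥ 1. Then D(x^k) is a hyperoval in PG(2, 2^e) if and only if gcd(i, e) = 1; equivalently, the determinant x·y^k + y·x^k + x·z^k + z·x^k + y·z^k + z·y^k is nonzero for all pairwise distinct x, y, z ∈ GF(2^e) if and only if gcd(i, e) = 1. -/

import Mathlib

/-!
For additive `f`, three points `(1, x, f x)`, `(1, y, f y)`, `(1, z, f z)` are collinear iff the
slopes `f u / u` at `u = y - x` and `u = z - x` agree, so no three points of the graph are collinear
iff the slope function is injective on nonzero elements. For `f u = u ^ 2 ^ i` the slope is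
`u ^ (2 ^ i - 1)`, and this power map is injective on the group of units of `GF(2 ^ e)`, of order
`2 ^ e - 1`, iff `2 ^ gcd i e - 1 = gcd (2 ^ i - 1) (2 ^ e - 1) = 1`.
-/

/-- The determinant of the homogeneous coordinates `(1, t, f t)`, `t = x, y, z`, of three points on
the graph of `f`; over a field it vanishes iff these points are collinear. -/
def graphDet {R : Type*} [CommRing R] (f : R → R) (x y z : R) : R :=
  !![1, x, f x; 1, y, f y; 1, z, f z].det

section Determinant

variable {R : Type*} [CommRing R]

theorem graphDet_eq_sub_mul_sub (f : R → R) (x y z : R) :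
    graphDet f x y z = (y - x) * (f z - f x) - (z - x) * (f y - f x) := by
  simp only [graphDet, Matrix.det_fin_three, Matrix.of_apply, Matrix.cons_val]
  ring

theorem graphDet_of_charTwo [CharP R 2] (f : R → R) (x y z : R) :
    graphDet f x y z = x * f y + y * f x + x * f z + z * f x + y * f z + z * f y := by
  rw [graphDet_eq_sub_mul_sub]
  simp only [CharTwo.sub_eq_add]
  linear_combination CharTwo.add_self_eq_zero (x * f x)

theorem graphDet_addMonoidHom (f : R →+ R) (x y z : R) :
    graphDet f x y z = (y - x) * f (z - x) - (z - x) * f (y - x) := by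
  rw [graphDet_eq_sub_mul_sub, map_sub, map_sub]

end Determinant

theorem forall_graphDet_ne_zero_iff_injective_slope {K : Type*} [Field K] (f : K →+ K) :
    (∀ x y z : K, x ≠ y → x ≠ z → y ≠ z → graphDet f x y z ≠ 0) ↔
      Function.Injective fun u : Kˣ => f u / u := by
  have slope_eq_iff {a b : K} (ha : a ≠ 0) (hb : b ≠ 0) :
      f a / a = f b / b ↔ a * f b - b * f a = 0 := by
    rw [div_eq_div_iff ha hb, sub_eq_zero, eq_comm, mul_comm (f b), mul_comm (f a)]
  constructor
  · intro hdet u v huv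
    by_contra hne
    refine hdet 0 u v u.ne_zero.symm v.ne_zero.symm (Units.val_injective.ne hne) ?_
    rw [graphDet_addMonoidHom, sub_zero, sub_zero]
    exact (slope_eq_iff u.ne_zero v.ne_zero).mp huv
  · intro hinj x y z hxy hxz hyz hdet
    have hy : y - x ≠ 0 := sub_ne_zero.mpr hxy.symm
    have hz : z - x ≠ 0 := sub_ne_zero.mpr hxz.symm
    rw [graphDet_addMonoidHom, ← slope_eq_iff hy hz] at hdet
    have hunits : Units.mk0 (y - x) hy = Units.mk0 (z - x) hz := hinj hdet
    exact hyz (sub_left_injective ((Units.mk0_inj hy hz).mp hunits))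

theorem pow_left_injective_iff_coprime_card {G : Type*} [Group G] [Finite G] {n : ℕ} :
    (Function.Injective fun g : G => g ^ n) ↔ (Nat.card G).Coprime n := by
  refine ⟨fun hinj => ?_, fun h => (powCoprime h).injective⟩
  by_contra hcop
  obtain ⟨p, hp, hpG, hpn⟩ := Nat.Prime.not_coprime_iff_dvd.mp hcop
  have : Fact p.Prime := ⟨hp⟩
  obtain ⟨g, hg⟩ := exists_prime_orderOf_dvd_card' p hpG
  have hgn : g ^ n = 1 := orderOf_dvd_iff_pow_eq_one.mp (hg ▸ hpn)
  have hg1 : g = 1 := hinj (hgn.trans (one_pow n).symm)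
  exact hp.ne_one (hg ▸ orderOf_eq_one_iff.mpr hg1)

theorem forall_graphDet_pow_expChar_ne_zero_iff {K : Type*} [Field K] [Finite K] (p i : ℕ)
    [ExpChar K p] :
    (∀ x y z : K, x ≠ y → x ≠ z → y ≠ z → graphDet (· ^ p ^ i) x y z ≠ 0) ↔
      (Nat.card K - 1).Coprime (p ^ i - 1) := by
  have slope_eq (u : Kˣ) : (u : K) ^ p ^ i / u = ↑(u ^ (p ^ i - 1)) := by
    rw [Units.val_pow_eq_pow_val, div_eq_iff u.ne_zero,
      pow_sub_one_mul (pow_pos (expChar_pos K p) i).ne']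
  calc
    _ ↔ Function.Injective fun u : Kˣ => (u : K) ^ p ^ i / u :=
      forall_graphDet_ne_zero_iff_injective_slope (iterateFrobenius K p i : K →+ K)
    _ ↔ Function.Injective fun u : Kˣ => u ^ (p ^ i - 1) := by
      simp only [slope_eq]
      exact Units.val_injective.of_comp_iff _
    _ ↔ (Nat.card K - 1).Coprime (p ^ i - 1) := by
      rw [pow_left_injective_iff_coprime_card, Nat.card_units]

theorem coprime_two_pow_sub_one_iff {m n : ℕ} :
    (2 ^ m - 1).Coprime (2 ^ n - 1) ↔ m.gcd n = 1 := by
  rw [Nat.Coprime, Nat.pow_sub_one_gcd_pow_sub_one]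
  calc
    2 ^ m.gcd n - 1 = 1 ↔ 2 ^ m.gcd n = 2 ^ 1 := by omega
    _ ↔ m.gcd n = 1 := Nat.pow_right_inj one_lt_two

theorem segre_two_power_hyperoval_general {K : Type*} [Field K] (i : ℕ) {e : ℕ}
    (hK : Nat.card K = 2 ^ e) :
    (∀ x y z : K, x ≠ y → x ≠ z → y ≠ z →
      x * y ^ 2 ^ i + y * x ^ 2 ^ i + x * z ^ 2 ^ i + z * x ^ 2 ^ i
        + y * z ^ 2 ^ i + z * y ^ 2 ^ i ≠ 0) ↔
    Nat.gcd i e = 1 := by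
  have : Finite K := Nat.finite_of_card_ne_zero (hK ▸ by positivity)
  have := Fintype.ofFinite K
  have : CharP K 2 := charP_of_card_eq_prime_pow (Nat.card_eq_fintype_card.symm.trans hK)
  simp only [← graphDet_of_charTwo (· ^ 2 ^ i)]
  rw [forall_graphDet_pow_expChar_ne_zero_iff, hK, coprime_two_pow_sub_one_iff, Nat.gcd_comm]

/-- Segre: For `k = 2^i` (`i ≥ 1`) and `e ≥ 1`, the set `D(x^k)` is a hyperoval
in `PG(2, 2^e)` — equivalently, the determinant
`x·y^k + y·x^k + x·z^k + z·x^k + y·z^k + z·y^k` is nonzero for all pairwise distinct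
`x, y, z ∈ GF(2^e)` — if and only if `gcd(i, e) = 1`. -/
theorem segre_two_power_hyperoval (i k e : ℕ) (hi : 1 ≤ i) (hk : k = 2 ^ i) (he : 1 ≤ e) :
    (∀ x y z : GaloisField 2 e, x ≠ y → x ≠ z → y ≠ z →
      x * y ^ k + y * x ^ k + x * z ^ k + z * x ^ k + y * z ^ k + z * y ^ k ≠ 0) ↔
    Nat.gcd i e = 1 := by
  subst hk
  exact segre_two_power_hyperoval_general i (GaloisField.card 2 e (Nat.one_le_iff_ne_zero.mp he))
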